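/- Let Ψ be an automorphism of F₂ × ℤ, where F₂ is the free group on two generators a, b. Then there exist an automorphism Φ of F₂ × ℤ and an element h ∈ F₂ × ℤ such that: (i) Φ(x) = h⁻¹·Ψ²(x)·h for all x (so [Φ] = [Ψ²] in Out(F₂ × ℤ)); (ii) Φ(1, n) = (1, n) for all n ∈ ℤ (Φ fixes the central ℤ factor pointwise); and (iii) the induced automorphism φ of F₂, defined by φ(g) = fst(Φ(g, 0)), fixes the commutator: φ([a,b]) = [a,b], where [a,b] = a⁻¹b⁻¹ab. -/

import Mathlib

/-- The group `F₂ × ℤ`. -/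
abbrev F2xZ : Type := FreeGroup (Fin 2) × Multiplicative ℤ

/-- The two generators of `F₂`. -/
def genA : FreeGroup (Fin 2) := FreeGroup.of 0
def genB : FreeGroup (Fin 2) := FreeGroup.of 1

/-!
The key fact is Nielsen's: every generating pair of the free group on `a, b` is carried to `(a, b)`
by elementary moves, each of which changes the commutator only by conjugation and inversion.

A pair `(x, y)` is viewed as a theta graph with two vertices and three edges labelled `t₀, t₁, t₂`,
where `x = t₀⁻¹ t₁` and `y = t₀⁻¹ t₂`. Multiplying all labels on the left (or all on the right) by
a common element is harmless, so in a theta graph of minimal total length nontrivial labels have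
pairwise distinct first letters and pairwise distinct last letters. If no label were trivial, the
closed paths of the graph could not spell a single letter. Collapsing a trivial edge leaves a rose
with two petals, whose four ends carry distinct letters unless they belong to the same petal; the
only single letters spelled by such a rose are its petals, so the petals are `a` and `b` up to order
and inversion.

Hence an automorphism of `F₂ × ℤ`, which preserves the centre `ℤ`, induces on `F₂` a map sending
`[a, b]` to a conjugate of `[a, b]` or of its inverse, and its square sends `[a, b]` to a conjugate
of itself. On `ℤ` the square is the identity because `±1` are the only units.
-/

section FirstLetter

variable {α : Type*} [DecidableEq α] {g h : FreeGroup α} {s : α × Bool}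

/-- The first letter of the reduced word of `g`, or `none` for `g = 1`. Last letters are not given a
separate definition: the last letter of `g` is the inverse of the first letter of `g⁻¹`. -/
def firstLetter (g : FreeGroup α) : Option (α × Bool) := g.toWord.head?

lemma firstLetter_eq_none_iff : firstLetter g = none ↔ g = 1 := by
  simp [firstLetter]

lemma exists_firstLetter_eq_some (hg : g ≠ 1) : ∃ s, firstLetter g = some s :=
  Option.ne_none_iff_exists'.1 (mt firstLetter_eq_none_iff.1 hg)

lemma norm_pos_of_ne_one (hg : g ≠ 1) : 0 < g.norm :=
  Nat.pos_of_ne_zero (mt FreeGroup.norm_eq_zero.1 hg)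

lemma norm_mk_singleton (s : α × Bool) : (FreeGroup.mk [s]).norm = 1 := by
  simp [FreeGroup.norm, FreeGroup.toWord_mk]

lemma firstLetter_mk_singleton (s : α × Bool) : firstLetter (FreeGroup.mk [s]) = some s := by
  simp [firstLetter, FreeGroup.toWord_mk]

lemma exists_toWord_eq_cons (hg : firstLetter g = some s) : ∃ l, g.toWord = s :: l :=
  List.head?_eq_some_iff.1 hg

lemma eq_mk_singleton_of_norm_eq_one (hg : firstLetter g = some s) (hn : g.norm = 1) :
    g = FreeGroup.mk [s] := by
  obtain ⟨l, hl⟩ := exists_toWord_eq_cons hg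
  have hl_nil : l = [] := by simpa [FreeGroup.norm, hl] using hn
  rw [← FreeGroup.mk_toWord (x := g), hl, hl_nil]

lemma norm_mk_singleton_inv_mul_lt (hg : firstLetter g = some s) :
    ((FreeGroup.mk [s])⁻¹ * g).norm < g.norm := by
  obtain ⟨l, hl⟩ := exists_toWord_eq_cons hg
  have hcancel : (FreeGroup.mk [s])⁻¹ * g = FreeGroup.mk l := by
    rw [inv_mul_eq_iff_eq_mul, FreeGroup.mul_mk, ← FreeGroup.mk_toWord (x := g), hl,
      List.singleton_append]
  calc ((FreeGroup.mk [s])⁻¹ * g).norm ≤ l.length := hcancel ▸ FreeGroup.norm_mk_le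
    _ < g.norm := by simp [FreeGroup.norm, hl]

lemma toWord_mul_of_firstLetter_ne (hgh : firstLetter g⁻¹ ≠ firstLetter h) :
    (g * h).toWord = g.toWord ++ h.toWord := by
  rw [FreeGroup.toWord_mul]
  refine FreeGroup.IsReduced.reduce_eq (List.isChain_append.2
    ⟨FreeGroup.isReduced_toWord, FreeGroup.isReduced_toWord, fun x hx y hy hxy ↦ ?_⟩)
  by_contra hne
  refine hgh ?_
  rw [Option.mem_def] at hx hy
  have hy_eq : y = (x.1, !x.2) := Prod.ext hxy.symm (Bool.eq_not.2 (Ne.symm hne))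
  simp [firstLetter, FreeGroup.toWord_inv, FreeGroup.invRev, hx, hy, hy_eq]

lemma norm_mul_of_firstLetter_ne (hgh : firstLetter g⁻¹ ≠ firstLetter h) :
    (g * h).norm = g.norm + h.norm := by
  simp [FreeGroup.norm, toWord_mul_of_firstLetter_ne hgh]

lemma firstLetter_mul_of_firstLetter_ne (hg : g ≠ 1) (hgh : firstLetter g⁻¹ ≠ firstLetter h) :
    firstLetter (g * h) = firstLetter g := by
  rw [firstLetter, toWord_mul_of_firstLetter_ne hgh,
    List.head?_append_of_ne_nil _ (mt FreeGroup.toWord_eq_nil_iff.1 hg), firstLetter]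

section Powers

lemma exists_toWord_pow_succ_eq (g : FreeGroup α) :
    ∃ C R : List (α × Bool), ∀ n : ℕ,
      (g ^ (n + 1)).toWord = C ++ (List.replicate (n + 1) R).flatten ++ FreeGroup.invRev C :=
  ⟨FreeGroup.reduceCyclically.conjugator g.toWord, FreeGroup.reduceCyclically g.toWord, fun n ↦ by
    rw [FreeGroup.toWord_pow, FreeGroup.reduceCyclically.reduce_flatten_replicate_succ
      FreeGroup.isReduced_toWord]⟩

lemma norm_le_norm_pow_succ (g : FreeGroup α) (n : ℕ) : g.norm ≤ (g ^ (n + 1)).norm := by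
  obtain ⟨C, R, hpow⟩ := exists_toWord_pow_succ_eq g
  have hg := hpow 0
  rw [zero_add, pow_one] at hg
  simp [FreeGroup.norm, hg, hpow n, add_mul]

lemma firstLetter_pow_succ (g : FreeGroup α) (n : ℕ) :
    firstLetter (g ^ (n + 1)) = firstLetter g := by
  obtain ⟨C, R, hpow⟩ := exists_toWord_pow_succ_eq g
  have hg := hpow 0
  rw [zero_add, pow_one] at hg
  rw [firstLetter, firstLetter, hg, hpow n]
  cases C <;> cases R <;> simp [List.replicate_succ]

lemma exists_firstLetter_eq_of_mem_zpowers {v : FreeGroup α} (hg : g ∈ Subgroup.zpowers v)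
    (hg1 : g ≠ 1) : ∃ v', (v' = v ∨ v' = v⁻¹) ∧ firstLetter g = firstLetter v' ∧
      v'.norm ≤ g.norm := by
  obtain ⟨k, rfl⟩ := Subgroup.mem_zpowers_iff.1 hg
  have hk : k ≠ 0 := fun hk ↦ hg1 (by rw [hk, zpow_zero])
  obtain ⟨n, hn⟩ := Nat.exists_eq_succ_of_ne_zero (Int.natAbs_ne_zero.2 hk)
  rcases k.natAbs_eq with hk | hk <;> rw [hk, hn]
  · rw [zpow_natCast]
    exact ⟨v, Or.inl rfl, firstLetter_pow_succ v n, norm_le_norm_pow_succ v n⟩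
  · rw [zpow_neg, zpow_natCast, ← inv_pow]
    exact ⟨v⁻¹, Or.inr rfl, firstLetter_pow_succ v⁻¹ n, norm_le_norm_pow_succ v⁻¹ n⟩

lemma eq_or_eq_inv_of_mem_zpowers_of_norm_eq_one {v : FreeGroup α}
    (hg : g ∈ Subgroup.zpowers v) (hnorm : g.norm = 1) : g = v ∨ g = v⁻¹ := by
  have hg1 : g ≠ 1 := by
    rintro rfl
    simp at hnorm
  obtain ⟨v', hv', hletter, hle⟩ := exists_firstLetter_eq_of_mem_zpowers hg hg1
  obtain ⟨s, hs⟩ := exists_firstLetter_eq_some hg1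
  have hv'1 : v' ≠ 1 := by
    rw [Ne, ← firstLetter_eq_none_iff, ← hletter, hs]
    exact Option.some_ne_none s
  have hv'_norm : v'.norm = 1 := le_antisymm (hle.trans_eq hnorm) (norm_pos_of_ne_one hv'1)
  rwa [eq_mk_singleton_of_norm_eq_one hs hnorm,
    ← eq_mk_singleton_of_norm_eq_one (hletter ▸ hs) hv'_norm]

end Powers

end FirstLetter

section Center

variable {α : Type*}

lemma not_commute_of_of {a b : α} (hab : a ≠ b) :
    ¬ Commute (FreeGroup.of a) (FreeGroup.of b) := by
  classical
  intro h
  have hword := congrArg FreeGroup.toWord h.eq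
  simp [FreeGroup.toWord_mul, FreeGroup.reduce.cons, hab, hab.symm] at hword

lemma center_freeGroup_eq_bot [Nontrivial α] : Subgroup.center (FreeGroup α) = ⊥ := by
  classical
  refine (Subgroup.eq_bot_iff_forall _).2 fun g hg ↦ by_contra fun hg1 ↦ ?_
  obtain ⟨⟨a, ε⟩, ha⟩ := exists_firstLetter_eq_some hg1
  obtain ⟨b, hba⟩ := exists_ne a
  obtain ⟨δ, hδ⟩ : ∃ δ, firstLetter g⁻¹ ≠ some (b, δ) := by
    by_contra! hall
    simpa using (hall true).symm.trans (hall false)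
  have hleft : firstLetter (FreeGroup.mk [(b, δ)] * g) = some (b, δ) := by
    rw [firstLetter_mul_of_firstLetter_ne, firstLetter_mk_singleton]
    · exact fun h ↦ by simpa [h] using norm_mk_singleton (b, δ)
    · have hinv : (FreeGroup.mk [(b, δ)])⁻¹ = FreeGroup.mk [(b, !δ)] := rfl
      rw [hinv, firstLetter_mk_singleton, ha]
      exact fun h ↦ hba (congrArg Prod.fst (Option.some.inj h))
  have hright : firstLetter (g * FreeGroup.mk [(b, δ)]) = some (a, ε) := by
    rw [firstLetter_mul_of_firstLetter_ne hg1 (by rwa [firstLetter_mk_singleton]), ha]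
  rw [← Subgroup.mem_center_iff.1 hg, hleft] at hright
  exact hba (congrArg Prod.fst (Option.some.inj hright))

end Center

section ArrowFamily

variable {ι G : Type*} [Group G]

/-- A family of subsets of a group closed under composition and inversion, like the labels of the
arrows of a groupoid with object set `ι`. It treats theta graphs and roses uniformly. -/
structure IsArrowFamily (A : ι → ι → Set G) : Prop where
  mul_mem {i j k : ι} {g h : G} : g ∈ A i j → h ∈ A j k → g * h ∈ A i k
  inv_mem {i j : ι} {g : G} : g ∈ A i j → g⁻¹ ∈ A j i

/-- `IsReducedProduct A i x` says that `x` is a nonempty product of nontrivial labels of arrows, the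
first of which starts at `i`, in which no two neighbours are composable. -/
inductive IsReducedProduct (A : ι → ι → Set G) : ι → G → Prop
  | single {i j : ι} {g : G} (hg : g ∈ A i j) (hg1 : g ≠ 1) : IsReducedProduct A i g
  | cons {i j k : ι} {g x : G} (hg : g ∈ A i j) (hg1 : g ≠ 1) (hjk : j ≠ k)
      (hx : IsReducedProduct A k x) : IsReducedProduct A i (g * x)

variable {A : ι → ι → Set G}

lemma IsReducedProduct.mul_left (hA : IsArrowFamily A) {i j k : ι} {g x : G}
    (hx : IsReducedProduct A k x) (hg : g ∈ A i j) :
    g * x = 1 ∨ ∃ l, IsReducedProduct A l (g * x) := by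
  by_cases hg1 : g = 1
  · exact Or.inr ⟨k, by rwa [hg1, one_mul]⟩
  by_cases hjk : j = k
  · subst hjk
    cases hx with
    | single hh _ =>
      exact or_iff_not_imp_left.2 fun hgh1 ↦ ⟨i, .single (hA.mul_mem hg hh) hgh1⟩
    | @cons _ _ m h y hh _ hlm hy =>
      rw [← mul_assoc]
      by_cases hgh1 : g * h = 1
      · exact Or.inr ⟨m, by rwa [hgh1, one_mul]⟩
      · exact Or.inr ⟨i, .cons (hA.mul_mem hg hh) hgh1 hlm hy⟩
  · exact Or.inr ⟨i, .cons hg hg1 hjk hx⟩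

lemma eq_one_or_isReducedProduct_of_mem_closure (hA : IsArrowFamily A) {x : G}
    (hx : x ∈ Subgroup.closure {g | ∃ i j, g ∈ A i j}) :
    x = 1 ∨ ∃ i, IsReducedProduct A i x := by
  have hmul {i j : ι} {g y : G} (hg : g ∈ A i j) (hy : y = 1 ∨ ∃ k, IsReducedProduct A k y) :
      g * y = 1 ∨ ∃ k, IsReducedProduct A k (g * y) := by
    rcases hy with rfl | ⟨k, hy⟩
    · rw [mul_one]
      exact or_iff_not_imp_left.2 fun hg1 ↦ ⟨i, .single hg hg1⟩
    · exact hy.mul_left hA hg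
  induction hx using Subgroup.closure_induction_left with
  | one => exact Or.inl rfl
  | mul_left g hg y _ ih =>
    obtain ⟨i, j, hg⟩ := hg
    exact hmul hg ih
  | inv_mul_cancel g hg y _ ih =>
    obtain ⟨i, j, hg⟩ := hg
    exact hmul (hA.inv_mem hg) ih

end ArrowFamily

section FirstLetterDeterminesSource

variable {ι α : Type*} [DecidableEq α]

/-- The first letter of the label of an arrow determines where the arrow starts, so that there is no
cancellation in a reduced product. -/
def FirstLetterDeterminesSource (A : ι → ι → Set (FreeGroup α)) : Prop :=
  ∀ ⦃i j k l : ι⦄ ⦃g h : FreeGroup α⦄, g ∈ A i j → h ∈ A k l → g ≠ 1 → h ≠ 1 →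
    firstLetter g = firstLetter h → i = k

variable {A : ι → ι → Set (FreeGroup α)}

lemma IsReducedProduct.exists_first_arrow (hA : IsArrowFamily A)
    (hsource : FirstLetterDeterminesSource A) {i : ι} {x : FreeGroup α}
    (hx : IsReducedProduct A i x) :
    ∃ j, ∃ g ∈ A i j, g ≠ 1 ∧ firstLetter x = firstLetter g ∧ (x.norm = 1 → x = g) := by
  induction hx with
  | @single i j g hg hg1 => exact ⟨j, g, hg, hg1, rfl, fun _ ↦ rfl⟩
  | @cons i j k g x hg hg1 hjk _ ih =>
    obtain ⟨l, h, hh, hh1, hxh, -⟩ := ih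
    have hgx : firstLetter g⁻¹ ≠ firstLetter x := fun heq ↦
      hjk (hsource (hA.inv_mem hg) hh (inv_ne_one.2 hg1) hh1 (heq.trans hxh))
    have hx1 : x ≠ 1 := by
      rwa [Ne, ← firstLetter_eq_none_iff, hxh, firstLetter_eq_none_iff]
    refine ⟨j, g, hg, hg1, firstLetter_mul_of_firstLetter_ne hg1 hgx, fun hnorm ↦ ?_⟩
    have hg_pos := norm_pos_of_ne_one hg1
    have hx_pos := norm_pos_of_ne_one hx1
    rw [norm_mul_of_firstLetter_ne hgx] at hnorm
    omega

lemma exists_mem_of_mem_closure_of_norm_eq_one (hA : IsArrowFamily A)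
    (hsource : FirstLetterDeterminesSource A) {x : FreeGroup α}
    (hx : x ∈ Subgroup.closure {g | ∃ i j, g ∈ A i j}) (hnorm : x.norm = 1) :
    ∃ i j, x ∈ A i j := by
  rcases eq_one_or_isReducedProduct_of_mem_closure hA hx with rfl | ⟨i, hx⟩
  · simp at hnorm
  · obtain ⟨j, g, hg, -, -, heq⟩ := hx.exists_first_arrow hA hsource
    exact ⟨i, j, heq hnorm ▸ hg⟩

lemma norm_ne_one_of_mem_closure_theta {t : ι → FreeGroup α} (ht : ∀ i, t i ≠ 1)
    (hfirst : Function.Injective fun i ↦ firstLetter (t i))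
    (hlast : Function.Injective fun i ↦ firstLetter (t i)⁻¹) {x : FreeGroup α}
    (hx : x ∈ Subgroup.closure {g | ∃ i j, g = (t i)⁻¹ * t j}) : x.norm ≠ 1 := by
  have hne {i j : ι} (hij : (t i)⁻¹ * t j ≠ 1) : firstLetter (t i)⁻¹⁻¹ ≠ firstLetter (t j) := by
    rw [inv_inv]
    refine hfirst.ne ?_
    rintro rfl
    exact hij (inv_mul_cancel _)
  have hfirst_letter {i j : ι} (hij : (t i)⁻¹ * t j ≠ 1) :
      firstLetter ((t i)⁻¹ * t j) = firstLetter (t i)⁻¹ :=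
    firstLetter_mul_of_firstLetter_ne (inv_ne_one.2 (ht i)) (hne hij)
  have hA : IsArrowFamily fun i j ↦ ({(t i)⁻¹ * t j} : Set (FreeGroup α)) :=
    ⟨by rintro i j k _ _ rfl rfl; simp [mul_assoc], by rintro i j _ rfl; simp⟩
  intro hnorm
  obtain ⟨i, j, rfl⟩ := exists_mem_of_mem_closure_of_norm_eq_one hA (by
    rintro i j k l _ _ rfl rfl hij hkl heq
    exact hlast ((hfirst_letter hij).symm.trans (heq.trans (hfirst_letter hkl)))) hx hnorm
  have hi_pos := norm_pos_of_ne_one (inv_ne_one.2 (ht i))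
  have hj_pos := norm_pos_of_ne_one (ht j)
  rw [norm_mul_of_firstLetter_ne (hne fun h ↦ by simp [h] at hnorm)] at hnorm
  omega

lemma exists_eq_or_eq_inv_of_mem_closure_rose {S : Set (FreeGroup α)}
    (hS : ∀ v ∈ S, ∀ w ∈ S, ∀ v' w', (v' = v ∨ v' = v⁻¹) → (w' = w ∨ w' = w⁻¹) →
      firstLetter v' = firstLetter w' → v = w)
    {x : FreeGroup α} (hx : x ∈ Subgroup.closure S) (hnorm : x.norm = 1) :
    ∃ v ∈ S, x = v ∨ x = v⁻¹ := by
  let A (v w : FreeGroup α) : Set (FreeGroup α) := {g | v = w ∧ v ∈ S ∧ g ∈ Subgroup.zpowers v}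
  have hA : IsArrowFamily A := by
    constructor
    · rintro v _ _ g h ⟨rfl, hv, hg⟩ ⟨rfl, -, hh⟩
      exact ⟨rfl, hv, mul_mem hg hh⟩
    · rintro v _ g ⟨rfl, hv, hg⟩
      exact ⟨rfl, hv, inv_mem hg⟩
  have hsource : FirstLetterDeterminesSource A := by
    rintro v _ w _ g h ⟨-, hv, hg⟩ ⟨-, hw, hh⟩ hg1 hh1 heq
    obtain ⟨v', hv', hgv, -⟩ := exists_firstLetter_eq_of_mem_zpowers hg hg1
    obtain ⟨w', hw', hhw, -⟩ := exists_firstLetter_eq_of_mem_zpowers hh hh1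
    exact hS v hv w hw v' w' hv' hw' (hgv.symm.trans (heq.trans hhw))
  have hS_arrow : S ⊆ {g | ∃ v w, g ∈ A v w} :=
    fun v hv ↦ ⟨v, v, rfl, hv, Subgroup.mem_zpowers v⟩
  have hxA := Subgroup.closure_mono hS_arrow hx
  obtain ⟨v, _, -, hv, hxv⟩ := exists_mem_of_mem_closure_of_norm_eq_one hA hsource hxA hnorm
  exact ⟨v, hv, eq_or_eq_inv_of_mem_zpowers_of_norm_eq_one hxv hnorm⟩

end FirstLetterDeterminesSource

open scoped commutatorElement

section NielsenReduces

variable {G : Type*} [Group G]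

/-- An elementary move on pairs of group elements: a Nielsen move, or a simultaneous conjugation. -/
inductive NielsenMove : G × G → G × G → Prop
  | swap (x y : G) : NielsenMove (x, y) (y, x)
  | inv_left (x y : G) : NielsenMove (x, y) (x⁻¹, y)
  | mul_right (x y : G) : NielsenMove (x, y) (x, x * y)
  | conj (c x y : G) : NielsenMove (x, y) (c⁻¹ * x * c, c⁻¹ * y * c)

/-- The pair `p` can be carried to the pair `q` by finitely many elementary moves. -/
def NielsenReduces : G × G → G × G → Prop := Relation.ReflTransGen NielsenMove

variable {p : G × G} {x y : G}

lemma NielsenReduces.swap (h : NielsenReduces p (x, y)) : NielsenReduces p (y, x) :=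
  h.tail (.swap x y)

lemma NielsenReduces.inv_left (h : NielsenReduces p (x, y)) : NielsenReduces p (x⁻¹, y) :=
  h.tail (.inv_left x y)

lemma NielsenReduces.inv_right (h : NielsenReduces p (x, y)) : NielsenReduces p (x, y⁻¹) :=
  h.swap.inv_left.swap

lemma NielsenReduces.mul_right (h : NielsenReduces p (x, y)) : NielsenReduces p (x, x * y) :=
  h.tail (.mul_right x y)

lemma NielsenReduces.conj (h : NielsenReduces p (x, y)) (c : G) :
    NielsenReduces p (c⁻¹ * x * c, c⁻¹ * y * c) :=
  h.tail (.conj c x y)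

lemma NielsenReduces.of_eq_or_eq_inv {v w : G} (h : NielsenReduces p (v, w))
    (hx : x = v ∨ x = v⁻¹) (hy : y = w ∨ y = w⁻¹) : NielsenReduces p (x, y) := by
  rcases hx with rfl | rfl <;> rcases hy with rfl | rfl
  exacts [h, h.inv_right, h.inv_left, h.inv_left.inv_right]

lemma NielsenMove.closure_eq_top {q : G × G} (h : NielsenMove p q)
    (hp : Subgroup.closure {p.1, p.2} = ⊤) : Subgroup.closure {q.1, q.2} = ⊤ := by
  have htop {x y x' y' : G} (hxy : Subgroup.closure {x, y} = ⊤)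
      (hx : x ∈ Subgroup.closure {x', y'}) (hy : y ∈ Subgroup.closure {x', y'}) :
      Subgroup.closure {x', y'} = ⊤ := by
    rw [eq_top_iff, ← hxy, Subgroup.closure_le, Set.pair_subset_iff]
    exact ⟨hx, hy⟩
  have hfst (x y : G) : x ∈ Subgroup.closure {x, y} := Subgroup.subset_closure (by simp)
  have hsnd (x y : G) : y ∈ Subgroup.closure {x, y} := Subgroup.subset_closure (by simp)
  cases h with
  | swap x y => exact htop hp (hsnd _ _) (hfst _ _)
  | inv_left x y => exact htop hp (inv_mem_iff.1 (hfst _ _)) (hsnd _ _)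
  | mul_right x y => exact htop hp (hfst _ _) ((mul_mem_cancel_left (hfst _ _)).1 (hsnd _ _))
  | conj c x y =>
    have himage : ({c⁻¹ * x * c, c⁻¹ * y * c} : Set G) =
        (MulAut.conj c⁻¹).toMonoidHom '' {x, y} := by
      simp [Set.image_pair]
    rw [himage, ← MonoidHom.map_closure, hp]
    exact Subgroup.map_top_of_surjective _ (MulAut.conj c⁻¹).surjective

lemma NielsenReduces.closure_eq_top {q : G × G} (h : NielsenReduces p q)
    (hp : Subgroup.closure {p.1, p.2} = ⊤) : Subgroup.closure {q.1, q.2} = ⊤ := by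
  induction h with
  | refl => exact hp
  | tail _ hmove ih => exact hmove.closure_eq_top ih

lemma isConj_inv_left_iff : IsConj x⁻¹ y ↔ IsConj x y⁻¹ := by
  simp only [isConj_iff, ← conj_inv, inv_eq_iff_eq_inv]

/-- The paper's commutator `[x, y] = x⁻¹ y⁻¹ x y` is `⁅x⁻¹, y⁻¹⁆` in Mathlib's convention. -/
lemma NielsenMove.isConj_commutator {q : G × G} (h : NielsenMove p q) :
    IsConj ⁅p.1⁻¹, p.2⁻¹⁆ ⁅q.1⁻¹, q.2⁻¹⁆ ∨ IsConj ⁅p.1⁻¹, p.2⁻¹⁆ ⁅q.1⁻¹, q.2⁻¹⁆⁻¹ := by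
  simp only [isConj_iff, commutatorElement_def]
  cases h with
  | swap x y => exact Or.inr ⟨1, by group⟩
  | inv_left x y => exact Or.inr ⟨x, by group⟩
  | mul_right x y => exact Or.inl ⟨1, by group⟩
  | conj c x y => exact Or.inl ⟨c⁻¹, by group⟩

lemma NielsenReduces.isConj_commutator {q : G × G} (h : NielsenReduces p q) :
    IsConj ⁅p.1⁻¹, p.2⁻¹⁆ ⁅q.1⁻¹, q.2⁻¹⁆ ∨ IsConj ⁅p.1⁻¹, p.2⁻¹⁆ ⁅q.1⁻¹, q.2⁻¹⁆⁻¹ := by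
  induction h with
  | refl => exact Or.inl (IsConj.refl _)
  | tail _ hmove ih =>
    rcases ih with ih | ih <;> rcases hmove.isConj_commutator with hstep | hstep
    · exact Or.inl (ih.trans hstep)
    · exact Or.inr (ih.trans hstep)
    · exact Or.inr (ih.trans (isConj_inv_left_iff.2 (by rwa [inv_inv])))
    · exact Or.inl (ih.trans (isConj_inv_left_iff.2 hstep))

end NielsenReduces

section Theta

variable {G : Type*} [Group G] {p : G × G} {t : Fin 3 → G}

/-- The pair `p` can be carried by elementary moves to a pair of generators of the fundamental group
of the theta graph whose three edges, directed from one vertex to the other, are labelled by `t`. -/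
def IsTheta (p : G × G) (t : Fin 3 → G) : Prop :=
  NielsenReduces p ((t 0)⁻¹ * t 1, (t 0)⁻¹ * t 2)

lemma IsTheta.mul_left (h : IsTheta p t) (g : G) : IsTheta p fun k ↦ g * t k := by
  simpa [IsTheta, mul_assoc] using h

lemma IsTheta.mul_right (h : IsTheta p t) (g : G) : IsTheta p fun k ↦ t k * g := by
  simpa [IsTheta, mul_assoc] using NielsenReduces.conj h g

lemma IsTheta.comp_swap (h : IsTheta p t) (i : Fin 3) : IsTheta p (t ∘ Equiv.swap 0 i) := by
  have hslide {x y : G} (h : NielsenReduces p (x, y)) : NielsenReduces p (x⁻¹, x⁻¹ * y) :=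
    h.inv_left.mul_right
  match i with
  | 0 => simpa using h
  | 1 => simpa [IsTheta, Equiv.swap_apply_of_ne_of_ne] using hslide h
  | 2 => simpa [IsTheta, Equiv.swap_apply_of_ne_of_ne] using (hslide h.swap).swap

lemma IsTheta.closure_eq_top (h : IsTheta p t) (hp : Subgroup.closure {p.1, p.2} = ⊤) :
    Subgroup.closure {g | ∃ i j, g = (t i)⁻¹ * t j} = ⊤ := by
  rw [eq_top_iff, ← NielsenReduces.closure_eq_top h hp]
  exact Subgroup.closure_mono (Set.pair_subset ⟨0, 1, rfl⟩ ⟨0, 2, rfl⟩)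

lemma isTheta_one_iff {v w : G} : IsTheta p ![1, v, w] ↔ NielsenReduces p (v, w) := by
  simp [IsTheta]

end Theta

section MinimalTheta

variable {α : Type*} [DecidableEq α]

lemma exists_sum_norm_mul_lt {t : Fin 3 → FreeGroup α} {i j : Fin 3} (hij : i ≠ j) (hi : t i ≠ 1)
    (heq : firstLetter (t i) = firstLetter (t j)) :
    ∃ g, ∑ k, (g * t k).norm < ∑ k, (t k).norm := by
  obtain ⟨s, hs⟩ := exists_firstLetter_eq_some hi
  have hlt_i := norm_mk_singleton_inv_mul_lt hs
  have hlt_j := norm_mk_singleton_inv_mul_lt (heq ▸ hs)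
  have hle (k : Fin 3) : ((FreeGroup.mk [s])⁻¹ * t k).norm ≤ 1 + (t k).norm := by
    grw [FreeGroup.norm_mul_le, FreeGroup.norm_inv_eq, norm_mk_singleton]
  refine ⟨(FreeGroup.mk [s])⁻¹, ?_⟩
  generalize (FreeGroup.mk [s])⁻¹ = g at *
  simp only [Fin.sum_univ_three]
  have hle_zero := hle 0
  have hle_one := hle 1
  have hle_two := hle 2
  -- Two labels get shorter, and the third gains at most one letter.
  fin_cases i <;> fin_cases j <;> first | exact absurd rfl hij | (dsimp at hlt_i hlt_j; omega)

/-- The theta graph with labels `t` is a shortest one to which the pair `p` can be carried. -/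
def IsMinimalTheta (p : FreeGroup α × FreeGroup α) (t : Fin 3 → FreeGroup α) : Prop :=
  MinimalFor (IsTheta p) (fun t ↦ ∑ k, (t k).norm) t

variable {p : FreeGroup α × FreeGroup α} {t : Fin 3 → FreeGroup α}

lemma exists_isMinimalTheta (p : FreeGroup α × FreeGroup α) : ∃ t, IsMinimalTheta p t :=
  exists_minimalFor_of_wellFoundedLT _ _ ⟨![1, p.1, p.2], isTheta_one_iff.2 .refl⟩

lemma IsMinimalTheta.of_sum_norm_eq {u : Fin 3 → FreeGroup α} (ht : IsMinimalTheta p t)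
    (hu : IsTheta p u) (hsum : ∑ k, (u k).norm = ∑ k, (t k).norm) : IsMinimalTheta p u :=
  ⟨hu, fun _ hy _ ↦ hsum.trans_le (ht.le hy)⟩

lemma IsMinimalTheta.eq_one_of_firstLetter_eq (ht : IsMinimalTheta p t) {i j : Fin 3}
    (hij : i ≠ j) (heq : firstLetter (t i) = firstLetter (t j)) : t i = 1 := by
  by_contra hi
  obtain ⟨g, hg⟩ := exists_sum_norm_mul_lt hij hi heq
  exact ht.not_lt (ht.1.mul_left g) hg

lemma IsMinimalTheta.eq_one_of_firstLetter_inv_eq (ht : IsMinimalTheta p t) {i j : Fin 3}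
    (hij : i ≠ j) (heq : firstLetter (t i)⁻¹ = firstLetter (t j)⁻¹) : t i = 1 := by
  by_contra hi
  obtain ⟨g, hg⟩ := exists_sum_norm_mul_lt (t := fun k ↦ (t k)⁻¹) hij (inv_ne_one.2 hi) heq
  refine ht.not_lt (ht.1.mul_right g⁻¹) ?_
  calc ∑ k, (t k * g⁻¹).norm = ∑ k, (g * (t k)⁻¹).norm :=
        Finset.sum_congr rfl fun k _ ↦ by rw [← FreeGroup.norm_inv_eq, mul_inv_rev, inv_inv]
    _ < ∑ k, ((t k)⁻¹).norm := hg
    _ = ∑ k, (t k).norm := by simp only [FreeGroup.norm_inv_eq]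

lemma IsMinimalTheta.exists_eq_one [Nonempty α] (ht : IsMinimalTheta p t)
    (hp : Subgroup.closure {p.1, p.2} = ⊤) : ∃ i, t i = 1 := by
  by_contra! hne
  obtain ⟨a⟩ := ‹Nonempty α›
  have ha : FreeGroup.of a ∈ Subgroup.closure {g | ∃ i j, g = (t i)⁻¹ * t j} :=
    ht.1.closure_eq_top hp ▸ Subgroup.mem_top _
  refine norm_ne_one_of_mem_closure_theta hne (fun i j heq ↦ ?_) (fun i j heq ↦ ?_) ha
    (FreeGroup.norm_of a)
  · exact by_contra fun hij ↦ hne i (ht.eq_one_of_firstLetter_eq hij heq)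
  · exact by_contra fun hij ↦ hne i (ht.eq_one_of_firstLetter_inv_eq hij heq)

lemma exists_isMinimalTheta_one [Nonempty α] (hp : Subgroup.closure {p.1, p.2} = ⊤) :
    ∃ v w, IsMinimalTheta p ![1, v, w] := by
  obtain ⟨t, ht⟩ := exists_isMinimalTheta p
  obtain ⟨i, hi⟩ := ht.exists_eq_one hp
  have hswap := ht.of_sum_norm_eq (ht.1.comp_swap i)
    (Equiv.sum_comp (Equiv.swap 0 i) fun k ↦ (t k).norm)
  have heq : t ∘ Equiv.swap 0 i = ![1, t (Equiv.swap 0 i 1), t (Equiv.swap 0 i 2)] := by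
    funext k
    fin_cases k <;> simp [hi]
  exact ⟨_, _, heq ▸ hswap⟩

lemma IsMinimalTheta.inv_left {v w : FreeGroup α} (h : IsMinimalTheta p ![1, v, w]) :
    IsMinimalTheta p ![1, v⁻¹, w] :=
  h.of_sum_norm_eq (isTheta_one_iff.2 (isTheta_one_iff.1 h.1).inv_left)
    (by simp [Fin.sum_univ_three])

lemma IsMinimalTheta.swap {v w : FreeGroup α} (h : IsMinimalTheta p ![1, v, w]) :
    IsMinimalTheta p ![1, w, v] :=
  h.of_sum_norm_eq (isTheta_one_iff.2 (isTheta_one_iff.1 h.1).swap)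
    (by simp [Fin.sum_univ_three, add_comm])

lemma IsMinimalTheta.eq_of_firstLetter_eq {v w v' w' : FreeGroup α}
    (h : IsMinimalTheta p ![1, v, w]) (hv : v' = v ∨ v' = v⁻¹) (hw : w' = w ∨ w' = w⁻¹)
    (heq : firstLetter v' = firstLetter w') : v = w := by
  have h' : IsMinimalTheta p ![1, v', w'] := by
    rcases hv with rfl | rfl <;> rcases hw with rfl | rfl
    exacts [h, h.swap.inv_left.swap, h.inv_left, h.inv_left.swap.inv_left.swap]
  have hv'1 : v' = 1 := h'.eq_one_of_firstLetter_eq (i := 1) (j := 2) (by decide) heq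
  have hw'1 : w' = 1 := h'.eq_one_of_firstLetter_eq (i := 2) (j := 1) (by decide) heq.symm
  simp only [hv'1, hw'1, eq_comm (a := (1 : FreeGroup α)), inv_eq_one, or_self] at hv hw
  rw [hv, hw]

lemma IsMinimalTheta.exists_petal {v w x : FreeGroup α} (h : IsMinimalTheta p ![1, v, w])
    (hp : Subgroup.closure {p.1, p.2} = ⊤) (hx : x.norm = 1) :
    (x = v ∨ x = v⁻¹) ∨ (x = w ∨ x = w⁻¹) := by
  have htop : Subgroup.closure {v, w} = ⊤ := (isTheta_one_iff.1 h.1).closure_eq_top hp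
  have hdistinct : ∀ u ∈ ({v, w} : Set (FreeGroup α)), ∀ u' ∈ ({v, w} : Set (FreeGroup α)),
      ∀ y y', (y = u ∨ y = u⁻¹) → (y' = u' ∨ y' = u'⁻¹) →
        firstLetter y = firstLetter y' → u = u' := by
    rintro u (rfl | rfl) u' (rfl | rfl) y y' hy hy' heq
    exacts [rfl, h.eq_of_firstLetter_eq hy hy' heq, h.swap.eq_of_firstLetter_eq hy hy' heq, rfl]
  simpa using exists_eq_or_eq_inv_of_mem_closure_rose hdistinct (htop ▸ Subgroup.mem_top x) hx

end MinimalTheta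

section GeneratingPairs

variable {α : Type*} {a b : α} {p : FreeGroup α × FreeGroup α}

theorem nielsenReduces_of_closure_eq_top (hab : a ≠ b) (hp : Subgroup.closure {p.1, p.2} = ⊤) :
    NielsenReduces p (FreeGroup.of a, FreeGroup.of b) := by
  classical
  have : Nonempty α := ⟨a⟩
  have hcommute {u : FreeGroup α} (ha : FreeGroup.of a = u ∨ FreeGroup.of a = u⁻¹)
      (hb : FreeGroup.of b = u ∨ FreeGroup.of b = u⁻¹) : False := by
    refine not_commute_of_of hab ?_
    rcases ha with ha | ha <;> rcases hb with hb | hb <;> rw [ha, hb] <;> simp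
  obtain ⟨v, w, hmin⟩ := exists_isMinimalTheta_one hp
  have hred : NielsenReduces p (v, w) := isTheta_one_iff.1 hmin.1
  rcases hmin.exists_petal hp (FreeGroup.norm_of a) with ha | ha <;>
    rcases hmin.exists_petal hp (FreeGroup.norm_of b) with hb | hb
  · exact (hcommute ha hb).elim
  · exact hred.of_eq_or_eq_inv ha hb
  · exact hred.swap.of_eq_or_eq_inv ha hb
  · exact (hcommute ha hb).elim

end GeneratingPairs

section ProductWithCentralFactor

variable {G A : Type*} [Group G] [CommGroup A]

/-- The endomorphism of `G` induced by an automorphism of `G × A`, restricting to the first factor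
and projecting back onto it. -/
def inducedHom (Ψ : MulAut (G × A)) : G →* G :=
  (MonoidHom.fst G A).comp (Ψ.toMonoidHom.comp (MonoidHom.inl G A))

lemma fst_mulAut_apply_one (hG : Subgroup.center G = ⊥) (Ψ : MulAut (G × A)) (z : A) :
    (Ψ (1, z)).1 = 1 := by
  have hz : (1, z) ∈ Subgroup.center (G × A) := by
    rw [Subgroup.center_prod, CommGroup.center_eq_top]
    exact ⟨one_mem _, Subgroup.mem_top z⟩
  have hΨz : Ψ (1, z) ∈ Subgroup.center (G × A) := MulEquivClass.apply_mem_center Ψ hz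
  rw [Subgroup.center_prod, hG] at hΨz
  exact hΨz.1

lemma fst_mulAut_apply (hG : Subgroup.center G = ⊥) (Ψ : MulAut (G × A)) (x : G × A) :
    (Ψ x).1 = inducedHom Ψ x.1 := by
  calc (Ψ x).1 = (Ψ ((x.1, 1) * (1, x.2))).1 := by simp
    _ = inducedHom Ψ x.1 * (Ψ (1, x.2)).1 := by rw [map_mul]; rfl
    _ = inducedHom Ψ x.1 := by rw [fst_mulAut_apply_one hG, mul_one]

lemma inducedHom_surjective (hG : Subgroup.center G = ⊥) (Ψ : MulAut (G × A)) :
    Function.Surjective (inducedHom Ψ) := fun g ↦ by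
  obtain ⟨x, hx⟩ := Ψ.surjective (g, 1)
  exact ⟨x.1, by rw [← fst_mulAut_apply hG, hx]⟩

/-- The automorphism of `A` to which an automorphism of `G × A` restricts when `A` is the centre. -/
def centralFactorAut (hG : Subgroup.center G = ⊥) (Ψ : MulAut (G × A)) : A ≃* A where
  toFun z := (Ψ (1, z)).2
  invFun z := (Ψ⁻¹ (1, z)).2
  left_inv z := by
    have hz : (1, (Ψ (1, z)).2) = Ψ (1, z) := Prod.ext (fst_mulAut_apply_one hG Ψ z).symm rfl
    simp only [hz, MulAut.inv_apply_self]
  right_inv z := by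
    have hz : (1, (Ψ⁻¹ (1, z)).2) = Ψ⁻¹ (1, z) :=
      Prod.ext (fst_mulAut_apply_one hG Ψ⁻¹ z).symm rfl
    simp only [hz, MulAut.apply_inv_self]
  map_mul' y z := by
    rw [← Prod.snd_mul, ← map_mul, Prod.mk_mul_mk, one_mul]

lemma mulAut_apply_one_mk (hG : Subgroup.center G = ⊥) (Ψ : MulAut (G × A)) (z : A) :
    Ψ (1, z) = (1, centralFactorAut hG Ψ z) :=
  Prod.ext (fst_mulAut_apply_one hG Ψ z) rfl

end ProductWithCentralFactor

lemma mulEquiv_multiplicative_int_apply_apply (e : Multiplicative ℤ ≃* Multiplicative ℤ)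
    (z : Multiplicative ℤ) : e (e z) = z := by
  obtain ⟨f, rfl⟩ := AddEquiv.toMultiplicative.surjective e
  rcases Int.addEquiv_eq_refl_or_neg f with rfl | rfl
  · rfl
  · exact inv_inv z

lemma closure_genA_genB_eq_top : Subgroup.closure {genA, genB} = ⊤ := by
  rw [← FreeGroup.closure_range_of (Fin 2)]
  congr 1
  ext g
  simp [genA, genB, eq_comm]

lemma isConj_map_map_commutator_genA_genB {f : FreeGroup (Fin 2) →* FreeGroup (Fin 2)}
    (hf : Function.Surjective f) :
    IsConj (f (f ⁅genA⁻¹, genB⁻¹⁆)) ⁅genA⁻¹, genB⁻¹⁆ := by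
  have hclosure : Subgroup.closure {f genA, f genB} = ⊤ := by
    rw [← Set.image_pair, ← MonoidHom.map_closure, closure_genA_genB_eq_top,
      Subgroup.map_top_of_surjective f hf]
  have hconj := (nielsenReduces_of_closure_eq_top (p := (f genA, f genB)) zero_ne_one
    hclosure).isConj_commutator
  simp only [← map_inv, ← map_commutatorElement] at hconj
  rcases hconj with hconj | hconj
  · exact (f.map_isConj hconj).trans hconj
  · have himage := f.map_isConj hconj
    rw [map_inv] at himage
    exact himage.trans (isConj_inv_left_iff.2 hconj)

/-- For any automorphism `Ψ` of `F₂ × ℤ` there is an automorphism `Φ` with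
`[Φ] = [Ψ²]` in `Out(F₂ × ℤ)`, fixing the central `ℤ` pointwise, whose induced
automorphism of `F₂` fixes the commutator `[a,b]`. -/
theorem aut_F2xZ_good_representative (Ψ : MulAut F2xZ) :
    ∃ (Φ : MulAut F2xZ) (h : F2xZ),
      (∀ x : F2xZ, Φ x = h⁻¹ * Ψ (Ψ x) * h) ∧
      (∀ n : ℤ, Φ (1, Multiplicative.ofAdd n) = (1, Multiplicative.ofAdd n)) ∧
      (Φ ((genA⁻¹ * genB⁻¹ * genA * genB : FreeGroup (Fin 2)), 1)).1 =
        genA⁻¹ * genB⁻¹ * genA * genB := by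
  have hG := center_freeGroup_eq_bot (α := Fin 2)
  have hcomm : genA⁻¹ * genB⁻¹ * genA * genB = ⁅genA⁻¹, genB⁻¹⁆ := by
    simp [commutatorElement_def]
  obtain ⟨c, hc⟩ := isConj_iff.1
    (isConj_map_map_commutator_genA_genB (inducedHom_surjective hG Ψ))
  refine ⟨MulAut.conj (c, 1) * (Ψ * Ψ), (c⁻¹, 1), fun x ↦ ?_, fun n ↦ ?_, ?_⟩
  · simp
  · simp [mulAut_apply_one_mk hG Ψ, mulEquiv_multiplicative_int_apply_apply]
  · simpa [hcomm, fst_mulAut_apply hG] using hc
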